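/- Mass and energy of Rayleigh–Jeans spectra: let M₀, E₀ > 0. There exist β, γ ∈ (0,∞) such that ∫₀^{2π} 1/(βω(p)+γ) dp = M₀ and ∫₀^{2π} ω(p)/(βω(p)+γ) dp = E₀ if and only if E₀/M₀ < 2/π. Moreover, when this condition holds, the pair (β,γ) is unique. -/

import Mathlib

open MeasureTheory Real Set

noncomputable section

/-- The dispersion relation `ω(p) = |sin(p/2)|`. -/
def ω (p : ℝ) : ℝ := |Real.sin (p / 2)|

/-- Parameterization `h(x,z)` of the resonant manifold. -/
def resH (x z : ℝ) : ℝ :=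
  (z - x) / 2 + 2 * Real.arcsin (Real.tan (|z - x| / 4) * Real.cos ((x + z) / 4))

/-- `F₊(x,z) = (cos(x/2)+cos(z/2))² + 4 sin(x/2) sin(z/2)`. -/
def Fplus (x z : ℝ) : ℝ :=
  (Real.cos (x / 2) + Real.cos (z / 2)) ^ 2 + 4 * Real.sin (x / 2) * Real.sin (z / 2)

/-- `F₋(x,z) = (cos(x/2)+cos(z/2))² − 4 sin(x/2) sin(z/2)`. -/
def Fminus (x z : ℝ) : ℝ :=
  (Real.cos (x / 2) + Real.cos (z / 2)) ^ 2 - 4 * Real.sin (x / 2) * Real.sin (z / 2)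

lemma omega_cont : Continuous ω := by unfold ω; fun_prop
lemma omega_nonneg (p : ℝ) : 0 ≤ ω p := abs_nonneg _
lemma omega_zero : ω 0 = 0 := by simp [ω]
lemma omega_pi : ω π = 1 := by simp [ω]

lemma den_pos {β γ : ℝ} (hβ : 0 ≤ β) (hγ : 0 < γ) (p : ℝ) : 0 < β * ω p + γ := by
  have := mul_nonneg hβ (omega_nonneg p)
  linarith

lemma rj_cont {β γ : ℝ} (hβ : 0 ≤ β) (hγ : 0 < γ) :
    Continuous fun p => 1 / (β * ω p + γ) := by
  have := omega_cont
  exact Continuous.div (by fun_prop) (by fun_prop) fun p => (den_pos hβ hγ p).ne'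

lemma rjE_cont {β γ : ℝ} (hβ : 0 ≤ β) (hγ : 0 < γ) :
    Continuous fun p => ω p / (β * ω p + γ) := by
  have := omega_cont
  exact Continuous.div (by fun_prop) (by fun_prop) fun p => (den_pos hβ hγ p).ne'

lemma integral_omega : (∫ p in (0:ℝ)..(2 * π), ω p) = 4 := by
  have h : (∫ p in (0:ℝ)..(2 * π), ω p) = ∫ p in (0:ℝ)..(2 * π), Real.sin (p / 2) := by
    apply intervalIntegral.integral_congr
    intro p hp
    rw [uIcc_of_le (by positivity)] at hp
    exact abs_of_nonneg (Real.sin_nonneg_of_nonneg_of_le_pi (by linarith [hp.1])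
      (by linarith [hp.2]))
  rw [h, intervalIntegral.integral_comp_div (fun x => Real.sin x) two_ne_zero, integral_sin]
  have : 2 * π / 2 = π := by ring
  rw [this]; norm_num

/-- Strict monotonicity of the map from parameters to moments. -/
lemma rj_mono {β₁ γ₁ β₂ γ₂ : ℝ} (h1 : 0 ≤ β₁) (g1 : 0 < γ₁) (h2 : 0 ≤ β₂) (g2 : 0 < γ₂)
    (hne : ¬ (β₁ = β₂ ∧ γ₁ = γ₂)) :
    0 < (β₂ - β₁) * ((∫ p in (0:ℝ)..(2 * π), ω p / (β₁ * ω p + γ₁))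
        - ∫ p in (0:ℝ)..(2 * π), ω p / (β₂ * ω p + γ₂))
      + (γ₂ - γ₁) * ((∫ p in (0:ℝ)..(2 * π), 1 / (β₁ * ω p + γ₁))
        - ∫ p in (0:ℝ)..(2 * π), 1 / (β₂ * ω p + γ₂)) := by
  have c1 := rj_cont h1 g1
  have c2 := rj_cont h2 g2
  have e1 := rjE_cont h1 g1
  have e2 := rjE_cont h2 g2
  have hπ := Real.pi_pos
  have u1 : Continuous fun p => (β₂ - β₁) * (ω p / (β₁ * ω p + γ₁) - ω p / (β₂ * ω p + γ₂)) :=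
    (e1.sub e2).const_mul _
  have u2 : Continuous fun p => (γ₂ - γ₁) * (1 / (β₁ * ω p + γ₁) - 1 / (β₂ * ω p + γ₂)) :=
    (c1.sub c2).const_mul _
  rw [← intervalIntegral.integral_sub (e1.intervalIntegrable _ _) (e2.intervalIntegrable _ _),
    ← intervalIntegral.integral_sub (c1.intervalIntegrable _ _) (c2.intervalIntegrable _ _),
    ← intervalIntegral.integral_const_mul, ← intervalIntegral.integral_const_mul,
    ← intervalIntegral.integral_add
      (u1.intervalIntegrable _ _) (u2.intervalIntegrable _ _)]
  have key : ∀ p, (β₂ - β₁) * (ω p / (β₁ * ω p + γ₁) - ω p / (β₂ * ω p + γ₂))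
      + (γ₂ - γ₁) * (1 / (β₁ * ω p + γ₁) - 1 / (β₂ * ω p + γ₂))
      = ((β₂ * ω p + γ₂) - (β₁ * ω p + γ₁)) ^ 2 /
        ((β₁ * ω p + γ₁) * (β₂ * ω p + γ₂)) := by
    intro p
    have d1 := (den_pos h1 g1 p).ne'
    have d2 := (den_pos h2 g2 p).ne'
    field_simp
    ring
  apply intervalIntegral.integral_pos (by positivity)
  · exact (u1.add u2).continuousOn
  · intro p _
    rw [key]
    have d1 := (den_pos h1 g1 p)
    have d2 := (den_pos h2 g2 p)
    positivity
  · by_cases hg : γ₁ = γ₂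
    · have hb : β₂ - β₁ ≠ 0 := fun h => hne ⟨by linarith, hg⟩
      refine ⟨π, ⟨by linarith, by linarith⟩, ?_⟩
      rw [key]
      have d1 := (den_pos h1 g1 π)
      have d2 := (den_pos h2 g2 π)
      apply div_pos _ (mul_pos d1 d2)
      rw [omega_pi, hg]
      have : β₂ * 1 + γ₂ - (β₁ * 1 + γ₂) = β₂ - β₁ := by ring
      rw [this]; positivity
    · have hb : γ₂ - γ₁ ≠ 0 := fun h => hg (by linarith)
      refine ⟨0, ⟨by linarith, by linarith⟩, ?_⟩
      rw [key]
      have d1 := (den_pos h1 g1 0)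
      have d2 := (den_pos h2 g2 0)
      apply div_pos _ (mul_pos d1 d2)
      rw [omega_zero]
      have : β₂ * 0 + γ₂ - (β₁ * 0 + γ₁) = γ₂ - γ₁ := by ring
      rw [this]; positivity

lemma mass_pos {β γ : ℝ} (hβ : 0 ≤ β) (hγ : 0 < γ) :
    0 < ∫ p in (0:ℝ)..(2 * π), 1 / (β * ω p + γ) := by
  apply intervalIntegral.intervalIntegral_pos_of_pos
  · exact (rj_cont hβ hγ).intervalIntegrable _ _
  · intro p
    have := den_pos hβ hγ p
    positivity
  · positivity

lemma rj_nec {β γ : ℝ} (hβ : 0 < β) (hγ : 0 < γ) :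
    (∫ p in (0:ℝ)..(2 * π), ω p / (β * ω p + γ)) /
      (∫ p in (0:ℝ)..(2 * π), 1 / (β * ω p + γ)) < 2 / π := by
  have hM := mass_pos hβ.le hγ
  set M := ∫ p in (0:ℝ)..(2 * π), 1 / (β * ω p + γ) with hMdef
  set E := ∫ p in (0:ℝ)..(2 * π), ω p / (β * ω p + γ) with hEdef
  have hπ := Real.pi_pos
  have h := rj_mono (β₁ := β) (γ₁ := γ) (β₂ := 0) (γ₂ := 2 * π / M) hβ.le hγ le_rfl
    (by positivity) (fun h => hβ.ne' h.1)
  have i1 : (∫ p in (0:ℝ)..(2 * π), 1 / (0 * ω p + 2 * π / M)) = M := by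
    simp only [zero_mul, zero_add, intervalIntegral.integral_const, smul_eq_mul]
    field_simp
    ring
  have i2 : (∫ p in (0:ℝ)..(2 * π), ω p / (0 * ω p + 2 * π / M)) = 4 * M / (2 * π) := by
    simp only [zero_mul, zero_add, intervalIntegral.integral_div, integral_omega]
    field_simp
  rw [i1, i2, ← hMdef, ← hEdef, sub_self, mul_zero, add_zero] at h
  have h3 : E < 4 * M / (2 * π) := by
    by_contra hc
    nlinarith
  rw [div_lt_iff₀ hM]
  calc E < _ := h3
    _ = 2 / π * M := by field_simp; ring

lemma rj_uniq {β₁ γ₁ β₂ γ₂ M E : ℝ} (h1 : 0 < β₁) (g1 : 0 < γ₁) (h2 : 0 < β₂) (g2 : 0 < γ₂)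
    (m1 : (∫ p in (0:ℝ)..(2 * π), 1 / (β₁ * ω p + γ₁)) = M)
    (e1 : (∫ p in (0:ℝ)..(2 * π), ω p / (β₁ * ω p + γ₁)) = E)
    (m2 : (∫ p in (0:ℝ)..(2 * π), 1 / (β₂ * ω p + γ₂)) = M)
    (e2 : (∫ p in (0:ℝ)..(2 * π), ω p / (β₂ * ω p + γ₂)) = E) :
    β₁ = β₂ ∧ γ₁ = γ₂ := by
  by_contra hne
  have := rj_mono h1.le g1 h2.le g2 hne
  rw [m1, e1, m2, e2] at this
  simp at this

lemma mass_lower {T : ℝ} (hT : 0 < T) :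
    2 * Real.log (1 + T * π) ≤ T * ∫ p in (0:ℝ)..(2 * π), 1 / (T * ω p + 1) := by
  have hπ := Real.pi_pos
  have hd : ∀ p ∈ uIcc (0:ℝ) (2 * π), 0 < 1 + T / 2 * p := by
    intro p hp
    rw [uIcc_of_le (by positivity)] at hp
    have := hp.1
    positivity
  have hc : ContinuousOn (fun p : ℝ => T / (1 + T / 2 * p)) (uIcc 0 (2 * π)) :=
    ContinuousOn.div (by fun_prop) (by fun_prop) fun p hp => (hd p hp).ne'
  have h1 : (∫ p in (0:ℝ)..(2 * π), T / (1 + T / 2 * p)) = 2 * Real.log (1 + T * π) := by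
    rw [intervalIntegral.integral_eq_sub_of_hasDerivAt
      (f := fun p => 2 * Real.log (1 + T / 2 * p))]
    · simp
      congr 1; ring
    · intro p hp
      have h0 : HasDerivAt (fun p : ℝ => 1 + T / 2 * p) (T / 2) p := by
        simpa using ((hasDerivAt_id p).const_mul (T / 2)).const_add 1
      refine ((h0.log (hd p hp).ne').const_mul 2).congr_deriv ?_
      ring
    · exact hc.intervalIntegrable
  rw [← h1, ← intervalIntegral.integral_const_mul]
  apply intervalIntegral.integral_mono_on (by positivity) hc.intervalIntegrable
  · exact ((rj_cont hT.le one_pos).const_mul T).intervalIntegrable _ _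
  · intro p hp
    rw [mul_one_div]
    have hw : ω p ≤ p / 2 := by
      have := hp.1
      have h2 : |Real.sin (p / 2)| ≤ |p / 2| := Real.abs_sin_le_abs
      rwa [abs_of_nonneg (by positivity : 0 ≤ p / 2)] at h2
    apply div_le_div_of_nonneg_left hT.le (den_pos hT.le one_pos p)
    nlinarith

lemma energy_upper {T : ℝ} (hT : 0 < T) :
    T * (∫ p in (0:ℝ)..(2 * π), ω p / (T * ω p + 1)) ≤ 2 * π := by
  have hπ := Real.pi_pos
  rw [← intervalIntegral.integral_const_mul]
  have : (∫ p in (0:ℝ)..(2 * π), (1:ℝ)) = 2 * π := by simp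
  refine le_trans ?_ this.le
  apply intervalIntegral.integral_mono_on (by positivity)
  · exact ((rjE_cont hT.le one_pos).const_mul T).intervalIntegrable _ _
  · exact intervalIntegrable_const
  · intro p _
    have := den_pos hT.le one_pos p
    rw [← mul_div_assoc, div_le_one this]
    linarith

lemma rj_ratio {r : ℝ} (hr : 0 < r) (hr2 : r < 2 / π) :
    ∃ t : ℝ, 0 < t ∧ (∫ p in (0:ℝ)..(2 * π), ω p / (t * ω p + 1)) =
      r * ∫ p in (0:ℝ)..(2 * π), 1 / (t * ω p + 1) := by
  have hπ := Real.pi_pos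
  have hw := omega_cont
  have cA : Continuous fun t : ℝ => ∫ p in (0:ℝ)..(2 * π), 1 / (|t| * ω p + 1) := by
    apply intervalIntegral.continuous_parametric_intervalIntegral_of_continuous'
    exact Continuous.div (by fun_prop) (by fun_prop)
      fun x => (den_pos (abs_nonneg x.1) one_pos x.2).ne'
  have cB : Continuous fun t : ℝ => ∫ p in (0:ℝ)..(2 * π), ω p / (|t| * ω p + 1) := by
    apply intervalIntegral.continuous_parametric_intervalIntegral_of_continuous'
    exact Continuous.div (by fun_prop) (by fun_prop)
      fun x => (den_pos (abs_nonneg x.1) one_pos x.2).ne'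
  set G : ℝ → ℝ := fun t => (∫ p in (0:ℝ)..(2 * π), ω p / (|t| * ω p + 1)) -
      r * ∫ p in (0:ℝ)..(2 * π), 1 / (|t| * ω p + 1) with hG
  have cG : Continuous G := cB.sub (cA.const_mul r)
  have G0 : 0 < G 0 := by
    simp only [hG, abs_zero, zero_mul, zero_add, div_one, integral_omega,
      intervalIntegral.integral_const, smul_eq_mul]
    rw [lt_div_iff₀ hπ] at hr2
    nlinarith
  set T := Real.exp (π / r) / π with hTdef
  have hT : 0 < T := by positivity
  have GT : G T < 0 := by
    simp only [hG, abs_of_pos hT]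
    have a := mass_lower hT
    have b := energy_upper hT
    have hl : π / r < Real.log (1 + T * π) := by
      rw [Real.lt_log_iff_exp_lt (by positivity)]
      have : T * π = Real.exp (π / r) := by rw [hTdef]; field_simp
      linarith
    rw [div_lt_iff₀ hr] at hl
    have := mul_le_mul_of_nonneg_left a hr.le
    by_contra hc
    push Not at hc
    have := mul_nonneg hT.le hc
    nlinarith
  obtain ⟨t, ht, hGt⟩ := intermediate_value_Icc' hT.le cG.continuousOn ⟨GT.le, G0.le⟩
  have ht0 : 0 < t := by
    rcases ht.1.lt_or_eq with h | h
    · exact h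
    · rw [← h] at hGt; linarith
  refine ⟨t, ht0, ?_⟩
  simp only [hG, abs_of_pos ht0] at hGt
  linarith

lemma rj_exists {M E : ℝ} (hM : 0 < M) (hE : 0 < E) (h : E / M < 2 / π) :
    ∃ β γ : ℝ, 0 < β ∧ 0 < γ ∧
        (∫ p in (0:ℝ)..(2 * π), 1 / (β * ω p + γ)) = M ∧
        (∫ p in (0:ℝ)..(2 * π), ω p / (β * ω p + γ)) = E := by
  obtain ⟨t, ht, h⟩ := rj_ratio (div_pos hE hM) h
  have hA := mass_pos ht.le one_pos
  set A := ∫ p in (0:ℝ)..(2 * π), 1 / (t * ω p + 1) with hAdef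
  have hγ : 0 < A / M := by positivity
  refine ⟨t * (A / M), A / M, by positivity, hγ, ?_, ?_⟩
  · have : ∀ p, 1 / (t * (A / M) * ω p + A / M) = 1 / (t * ω p + 1) / (A / M) := by
      intro p
      rw [div_div]; congr 1; ring
    simp only [this, intervalIntegral.integral_div]
    rw [← hAdef]; field_simp
  · have : ∀ p, ω p / (t * (A / M) * ω p + A / M) = ω p / (t * ω p + 1) / (A / M) := by
      intro p
      rw [div_div]; congr 1; ring
    simp only [this, intervalIntegral.integral_div]
    rw [h]; field_simp

/-- **Mass and energy of Rayleigh–Jeans spectra:** for `M₀, E₀ > 0`, there exist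
`β, γ ∈ (0,∞)` with `∫₀^{2π} dp/(βω(p)+γ) = M₀` and `∫₀^{2π} ω(p) dp/(βω(p)+γ) = E₀`
if and only if `E₀/M₀ < 2/π`; moreover in that case the pair `(β,γ)` is unique. -/
theorem stmt19 (M₀ E₀ : ℝ) (hM : 0 < M₀) (hE : 0 < E₀) :
    ((∃ β γ : ℝ, 0 < β ∧ 0 < γ ∧
        (∫ p in (0:ℝ)..(2 * π), 1 / (β * ω p + γ)) = M₀ ∧
        (∫ p in (0:ℝ)..(2 * π), ω p / (β * ω p + γ)) = E₀) ↔
      E₀ / M₀ < 2 / π) ∧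
    (E₀ / M₀ < 2 / π →
      ∃! bg : ℝ × ℝ, 0 < bg.1 ∧ 0 < bg.2 ∧
        (∫ p in (0:ℝ)..(2 * π), 1 / (bg.1 * ω p + bg.2)) = M₀ ∧
        (∫ p in (0:ℝ)..(2 * π), ω p / (bg.1 * ω p + bg.2)) = E₀) := by
  refine ⟨⟨?_, rj_exists hM hE⟩, fun h => ?_⟩
  · rintro ⟨β, γ, hβ, hγ, rfl, rfl⟩
    exact rj_nec hβ hγ
  · obtain ⟨β, γ, hβ, hγ, hm, he⟩ := rj_exists hM hE h
    refine ⟨(β, γ), ⟨hβ, hγ, hm, he⟩, ?_⟩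
    rintro ⟨b, g⟩ ⟨hb, hg, hm', he'⟩
    obtain ⟨h1, h2⟩ := rj_uniq hb hg hβ hγ hm' he' hm he
    exact Prod.ext h1 h2
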